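/- arXiv:math/0406145 — 4 statements merged into one kernel-verified Lean document; each statement's English description precedes it below -/
import Mathlib

section
/- Let V be a finite-dimensional complex inner product space and let σ be a unitary endomorphism of V with σ∘σ = −id. If the eigenspace of σ for the eigenvalue i and the eigenspace of σ for the eigenvalue −i have equal dimension, then there exists a linear subspace L ⊆ V such that L is orthogonal to σ(L) and V is the (internal direct) sum L ⊕ σ(L). -/
/-! On the `±i`-eigenspaces `E₊`, `E₋`, which are orthogonal and sum to `V`, choose a linear
isometry `U : E₊ ≃ E₋` (available since the dimensions agree). The graph
`L = {x + U x | x ∈ E₊}` works: `σ (x + U x) = i (x - U x)`, so `σ L` is the graph of `-U`, and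
`⟪y + U y, x - U x⟫ = ⟪y, x⟫ - ⟪U y, U x⟫ = 0`, while `x` and `U x` are combinations of
`x + U x` and `x - U x`. -/

open scoped InnerProductSpace

/-- Palais–Seeley / Müller splitting: for a unitary `σ` with `σ² = −id` whose
`±i`-eigenspaces have equal dimension, there is a subspace `L` with `σL ⟂ L`
and `V = L ⊕ σL` (used for the projection `Π₊` in (3.5)). -/
theorem exists_lagrangian_type_splitting
    (V : Type*) [NormedAddCommGroup V] [InnerProductSpace ℂ V] [FiniteDimensional ℂ V]
    (σ : V →ₗ[ℂ] V)
    (hunit : ∀ x y : V, ⟪σ x, σ y⟫_ℂ = ⟪x, y⟫_ℂ)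
    (hσ2 : σ ∘ₗ σ = -LinearMap.id)
    (hdim : Module.finrank ℂ (Module.End.eigenspace σ Complex.I)
        = Module.finrank ℂ (Module.End.eigenspace σ (-Complex.I))) :
    ∃ L : Submodule ℂ V, L.map σ ≤ Lᗮ ∧ L ⊔ L.map σ = ⊤ := by
  have hss (v : V) : σ (σ v) = -v := by
    simpa using LinearMap.congr_fun hσ2 v
  set P := Module.End.eigenspace σ Complex.I with hP
  set N := Module.End.eigenspace σ (-Complex.I) with hN
  have memP (v : V) : v ∈ P ↔ σ v = Complex.I • v := Module.End.mem_eigenspace_iff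
  have memN (v : V) : v ∈ N ↔ σ v = (-Complex.I) • v := Module.End.mem_eigenspace_iff
  have horth (x y : V) (hx : x ∈ P) (hy : y ∈ N) : ⟪x, y⟫_ℂ = 0 := by
    have h := hunit x y
    rw [(memP x).1 hx, (memN y).1 hy, inner_smul_left, inner_smul_right, Complex.conj_I] at h
    -- `h` now says `i² ⟪x, y⟫ = ⟪x, y⟫`
    linear_combination (-1 / 2 : ℂ) * h + (1 / 2 : ℂ) * ⟪x, y⟫_ℂ * Complex.I_mul_I
  have horth' (x y : V) (hx : x ∈ P) (hy : y ∈ N) : ⟪y, x⟫_ℂ = 0 :=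
    inner_eq_zero_symm.1 (horth x y hx hy)
  let U : P ≃ₗᵢ[ℂ] N :=
    (stdOrthonormalBasis ℂ P).equiv (stdOrthonormalBasis ℂ N) (finCongr hdim)
  have hU (x y : P) : ⟪(U x : V), (U y : V)⟫_ℂ = ⟪(x : V), (y : V)⟫_ℂ := U.inner_map_map x y
  let T : P →ₗ[ℂ] V := P.subtype + N.subtype ∘ₗ U.toLinearEquiv.toLinearMap
  have hT (x : P) : T x = x + U x := rfl
  have hσT (x : P) : σ (T x) = Complex.I • ((x : V) - U x) := by
    rw [hT, map_add, (memP x).1 x.2, (memN (U x)).1 (U x).2]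
    module
  refine ⟨LinearMap.range T, ?_, ?_⟩
  · rintro _ ⟨_, ⟨x, rfl⟩, rfl⟩
    rw [Submodule.mem_orthogonal]
    rintro _ ⟨y, rfl⟩
    rw [hσT, hT, inner_smul_right, inner_sub_right, inner_add_left, inner_add_left, hU,
      horth y (U x) y.2 (U x).2, horth' x (U y) x.2 (U y).2]
    simp
  · have hL (x : P) : T x ∈ LinearMap.range T ⊔ (LinearMap.range T).map σ :=
      Submodule.mem_sup_left ⟨x, rfl⟩
    have hσL (x : P) : σ (T x) ∈ LinearMap.range T ⊔ (LinearMap.range T).map σ :=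
      Submodule.mem_sup_right ⟨T x, ⟨x, rfl⟩, rfl⟩
    have hsub (x : P) : (x : V) - U x ∈ LinearMap.range T ⊔ (LinearMap.range T).map σ := by
      have h := Submodule.smul_mem _ (-Complex.I) (hσL x)
      rwa [hσT, smul_smul, neg_mul, Complex.I_mul_I, neg_neg, one_smul] at h
    have hPle (x : P) : (x : V) ∈ LinearMap.range T ⊔ (LinearMap.range T).map σ := by
      have h := Submodule.smul_mem _ (1 / 2 : ℂ) (Submodule.add_mem _ (hL x) (hsub x))
      rw [hT] at h
      convert h using 1
      module
    have hNle (z : N) : (z : V) ∈ LinearMap.range T ⊔ (LinearMap.range T).map σ := by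
      have h := Submodule.sub_mem _ (hL (U.symm z)) (hPle (U.symm z))
      simpa [hT] using h
    rw [eq_top_iff]
    intro v _
    have hp : v - Complex.I • σ v ∈ P := by
      rw [memP, map_sub, map_smul, hss, smul_sub, smul_smul, Complex.I_mul_I]
      module
    have hn : v + Complex.I • σ v ∈ N := by
      rw [memN, map_add, map_smul, hss, smul_add, smul_smul, neg_mul, Complex.I_mul_I]
      module
    have h := Submodule.smul_mem _ (1 / 2 : ℂ) (Submodule.add_mem _ (hPle ⟨_, hp⟩) (hNle ⟨_, hn⟩))
    convert h using 1
    module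
end

section
/- Let V be a finite-dimensional complex inner product space, A a selfadjoint endomorphism of V, and σ a unitary endomorphism with σ∘σ = −id and σ∘A = −A∘σ. Let L be a subspace of ker A with L orthogonal to σ(L) and ker A = L ⊕ σ(L), and let Π₊ be the orthogonal projection of V onto the subspace V₊(A) + L. Then id − Π₊ = −σ∘Π₊∘σ. -/
/-!
Put `W = V₊(A) + L`, the range of the orthogonal projection `Π₊`. Since `σ` anticommutes with `A`, it
maps the `μ`-eigenspace into the `(-μ)`-eigenspace; since `A` is symmetric, eigenspaces are mutually
orthogonal and span `V`. Together with `L ⟂ σ L` and `ker A = L ⊕ σ L` this gives `σ W ⟂ W`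
(`apsSpace_map_isOrtho`) and `W + σ W = V` (`apsSpace_sup_map_eq_top`). The identity
`id = Π₊ - σ Π₊ σ` can then be checked separately on `W` and on `σ W`, where it follows from `σ² = -id`
and the fact that `Π₊` fixes `W` and kills `σ W`.
-/

open scoped InnerProductSpace

/-- The span of the eigenvectors of `A` corresponding to positive eigenvalues. -/
noncomputable def posEigenspaceEnd {V : Type*} [NormedAddCommGroup V]
    [InnerProductSpace ℂ V] (A : V →ₗ[ℂ] V) : Submodule ℂ V :=
  Submodule.span ℂ {z : V | z ≠ 0 ∧ ∃ μ : ℝ, 0 < μ ∧ A z = (μ : ℂ) • z}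

section helpers

variable {V : Type*} [NormedAddCommGroup V] [InnerProductSpace ℂ V]

/-- `σ` maps the `μ`-eigenspace of `A` into the `(-μ)`-eigenspace. -/
lemma eigen_map_anti {A σ : V →ₗ[ℂ] V} (hanti : σ ∘ₗ A = -(A ∘ₗ σ)) {z : V} {μ : ℂ}
    (hz : A z = μ • z) : A (σ z) = (-μ) • σ z := by
  have h := LinearMap.congr_fun hanti z
  simp only [LinearMap.comp_apply, LinearMap.neg_apply, hz, map_smul] at h
  rw [neg_smul, h, neg_neg]

/-- `V₊(A) + L` has a single family of generators: eigenvectors for eigenvalues `μ ≥ 0`, those for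
`μ = 0` being taken from `L` only. -/
lemma apsSpace_eq_span {A : V →ₗ[ℂ] V} {L : Submodule ℂ V} (hLker : L ≤ LinearMap.ker A) :
    posEigenspaceEnd A ⊔ L =
      Submodule.span ℂ {z : V | ∃ μ : ℝ, 0 ≤ μ ∧ A z = (μ : ℂ) • z ∧ (μ = 0 → z ∈ L)} := by
  apply le_antisymm
  · refine sup_le (Submodule.span_mono ?_) fun z hz => Submodule.subset_span ?_
    · rintro z ⟨-, μ, hμ, hz⟩
      exact ⟨μ, hμ.le, hz, fun h => absurd h hμ.ne'⟩
    · exact ⟨0, le_rfl, by simpa using hLker hz, fun _ => hz⟩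
  · refine Submodule.span_le.2 ?_
    rintro z ⟨μ, hμ, hz, hzL⟩
    rcases hμ.eq_or_lt with h | h
    · exact Submodule.mem_sup_right (hzL h.symm)
    · by_cases hz0 : z = 0
      · rw [hz0]
        exact Submodule.zero_mem _
      · exact Submodule.mem_sup_left (Submodule.subset_span ⟨hz0, μ, h, hz⟩)

lemma apsSpace_map_isOrtho {A σ : V →ₗ[ℂ] V}
    (hA : ∀ x y : V, ⟪A x, y⟫_ℂ = ⟪x, A y⟫_ℂ)
    (hanti : σ ∘ₗ A = -(A ∘ₗ σ))
    {L : Submodule ℂ V} (hLker : L ≤ LinearMap.ker A) (hLorth : L.map σ ≤ Lᗮ) :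
    (posEigenspaceEnd A ⊔ L).map σ ⟂ (posEigenspaceEnd A ⊔ L) := by
  rw [apsSpace_eq_span hLker, Submodule.map_span, Submodule.isOrtho_span]
  rintro _ ⟨z, ⟨μ, hμ, hz, hzL⟩, rfl⟩ w ⟨ν, hν, hw, hwL⟩
  have h := hA (σ z) w
  rw [eigen_map_anti hanti hz, hw, inner_smul_left, inner_smul_right] at h
  simp only [map_neg, Complex.conj_ofReal] at h
  have h2 : ((μ + ν : ℝ) : ℂ) * ⟪σ z, w⟫_ℂ = 0 := by
    push_cast
    linear_combination -h
  rcases mul_eq_zero.1 h2 with h3 | h3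
  · have h4 : μ + ν = 0 := by exact_mod_cast h3
    exact Submodule.inner_left_of_mem_orthogonal (hwL (by linarith))
      (hLorth (Submodule.mem_map_of_mem (hzL (by linarith))))
  · exact h3

lemma apsSpace_sup_map_eq_top [FiniteDimensional ℂ V] {A σ : V →ₗ[ℂ] V}
    (hA : ∀ x y : V, ⟪A x, y⟫_ℂ = ⟪x, A y⟫_ℂ)
    (hσσ : ∀ x, σ (σ x) = -x)
    (hanti : σ ∘ₗ A = -(A ∘ₗ σ))
    {L : Submodule ℂ V} (hLsum : LinearMap.ker A = L ⊔ L.map σ) :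
    (posEigenspaceEnd A ⊔ L) ⊔ (posEigenspaceEnd A ⊔ L).map σ = ⊤ := by
  have hsym : A.IsSymmetric := hA
  have htop : (⨆ μ, Module.End.eigenspace A μ) = ⊤ :=
    Submodule.orthogonal_eq_bot_iff.1 hsym.orthogonalComplement_iSup_eigenspaces_eq_bot
  rw [eq_top_iff, ← htop]
  refine iSup_le fun μ z hz => ?_
  by_cases hz0 : z = 0
  · rw [hz0]
    exact Submodule.zero_mem _
  have hμ : ((μ.re : ℝ) : ℂ) = μ := Complex.conj_eq_iff_re.1
    (hsym.conj_eigenvalue_eq_self (Module.End.hasEigenvalue_of_hasEigenvector ⟨hz, hz0⟩))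
  rw [Module.End.mem_eigenspace_iff, ← hμ] at hz
  rcases lt_trichotomy μ.re 0 with h | h | h
  · -- `σ z` is an eigenvector for `-μ > 0`, and `z = σ (-σ z)`.
    refine Submodule.mem_sup_right ⟨-σ z, ?_, by rw [map_neg, hσσ, neg_neg]⟩
    refine Submodule.neg_mem _ (Submodule.mem_sup_left (Submodule.subset_span
      ⟨fun h0 => hz0 ?_, -μ.re, by linarith, ?_⟩))
    · simpa [h0] using hσσ z
    · simpa using eigen_map_anti hanti hz
  · have hk : z ∈ LinearMap.ker A := by simpa [h] using hz
    rw [hLsum] at hk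
    have hle : L ⊔ L.map σ ≤
        (posEigenspaceEnd A ⊔ L) ⊔ (posEigenspaceEnd A ⊔ L).map σ :=
      sup_le_sup le_sup_right (Submodule.map_mono le_sup_right)
    exact hle hk
  · exact Submodule.mem_sup_left (Submodule.mem_sup_left (Submodule.subset_span ⟨hz0, _, h, hz⟩))

end helpers


/-- The orthogonal projection `Π₊` onto `V₊(A) + L` satisfies the symmetry
condition (3.4): `id − Π₊ = −σ Π₊ σ`. -/
theorem aps_projection_symmetry_condition
    (V : Type*) [NormedAddCommGroup V] [InnerProductSpace ℂ V] [FiniteDimensional ℂ V]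
    (A σ : V →ₗ[ℂ] V)
    (hA : ∀ x y : V, ⟪A x, y⟫_ℂ = ⟪x, A y⟫_ℂ)
    (hunit : ∀ x y : V, ⟪σ x, σ y⟫_ℂ = ⟪x, y⟫_ℂ)
    (hσ2 : σ ∘ₗ σ = -LinearMap.id)
    (hanti : σ ∘ₗ A = -(A ∘ₗ σ))
    (L : Submodule ℂ V) (hLker : L ≤ LinearMap.ker A)
    (hLorth : L.map σ ≤ Lᗮ) (hLsum : LinearMap.ker A = L ⊔ L.map σ)
    (Pp : V →ₗ[ℂ] V)
    (hPp2 : Pp ∘ₗ Pp = Pp)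
    (hPpsym : ∀ x y : V, ⟪Pp x, y⟫_ℂ = ⟪x, Pp y⟫_ℂ)
    (hPprange : LinearMap.range Pp = posEigenspaceEnd A ⊔ L) :
    LinearMap.id - Pp = -(σ ∘ₗ Pp ∘ₗ σ) := by
  have hσσ : ∀ x, σ (σ x) = -x := fun x => LinearMap.congr_fun hσ2 x
  have hfix : ∀ x ∈ posEigenspaceEnd A ⊔ L, Pp x = x := by
    rw [← hPprange]
    rintro _ ⟨y, rfl⟩
    exact LinearMap.congr_fun hPp2 y
  have hkill : ∀ x ∈ posEigenspaceEnd A ⊔ L, Pp (σ x) = 0 := by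
    intro x hx
    refine ext_inner_right ℂ fun y => ?_
    rw [hPpsym, inner_zero_left]
    exact (apsSpace_map_isOrtho hA hanti hLker hLorth).inner_eq (Submodule.mem_map_of_mem hx)
      (hPprange ▸ LinearMap.mem_range_self Pp y)
  ext x
  have hx : x ∈ (posEigenspaceEnd A ⊔ L) ⊔ (posEigenspaceEnd A ⊔ L).map σ := by
    rw [apsSpace_sup_map_eq_top hA hσσ hanti hLsum]
    exact Submodule.mem_top
  obtain ⟨u, hu, _, ⟨v, hv, rfl⟩, rfl⟩ := Submodule.mem_sup.1 hx
  simp [hfix u hu, hfix v hv, hkill u hu, hkill v hv, hσσ]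
end

section
/- Let V be a finite-dimensional complex inner product space and A a selfadjoint endomorphism of V. Let Π₀ be the orthogonal projection onto ker A and let |A| be the unique positive-semidefinite square root of A∘A. Then |A| + Π₀ is invertible, and the orthogonal projection Π_> onto V₊(A) satisfies Π_> = (1/2)·(A + |A|)∘(|A| + Π₀)⁻¹. -/
/-!
Fix an orthonormal eigenbasis of the selfadjoint operator `A`, and let `A e = λ e` be one of its
members. All operators involved act diagonally on `e`: `|A| e = |λ| e` (`sqrt_apply_eigenvector`),
while `Π₀ e` is `e` or `0` according as `λ` vanishes or not, and `Π_> e` is `e` or `0` according as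
`λ` is positive or not, because eigenvectors with distinct eigenvalues are orthogonal
(`inner_eq_zero_of_eigenvalues_ne`) and an orthogonal projection kills what is orthogonal to its
range (`apply_eq_zero_of_orthogonal_range`). Hence `|A| + Π₀` multiplies `e` by a nonzero number, so it is
onto and thus invertible, and comparing scalars gives `Π_> (|A| + Π₀) = ½ (A + |A|)`.
-/

open scoped InnerProductSpace

section

variable {V : Type*} [NormedAddCommGroup V] [InnerProductSpace ℂ V]

theorem apply_eq_self_of_mem_range {P : V →ₗ[ℂ] V} (hP : P ∘ₗ P = P) {x : V}
    (hx : x ∈ LinearMap.range P) : P x = x := by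
  obtain ⟨y, rfl⟩ := hx
  exact LinearMap.congr_fun hP y

/-- The kernel of an orthogonal projection contains the orthogonal complement of its range, since
`⟪P x, P x⟫ = ⟪x, P x⟫`. -/
theorem apply_eq_zero_of_orthogonal_range {P : V →ₗ[ℂ] V} (hP : P ∘ₗ P = P)
    (hsym : ∀ x y : V, ⟪P x, y⟫_ℂ = ⟪x, P y⟫_ℂ) {x : V}
    (hx : ∀ y ∈ LinearMap.range P, ⟪x, y⟫_ℂ = 0) : P x = 0 := by
  rw [← inner_self_eq_zero (𝕜 := ℂ), hsym,
    apply_eq_self_of_mem_range hP (LinearMap.mem_range_self P x)]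
  exact hx _ (LinearMap.mem_range_self P x)

theorem inner_eq_zero_of_eigenvalues_ne {A : V →ₗ[ℂ] V}
    (hA : ∀ x y : V, ⟪A x, y⟫_ℂ = ⟪x, A y⟫_ℂ) {l m : ℝ} (hlm : l ≠ m) {x y : V}
    (hx : A x = (l : ℂ) • x) (hy : A y = (m : ℂ) • y) : ⟪x, y⟫_ℂ = 0 := by
  have h := hA x y
  rw [hx, hy, inner_smul_left, inner_smul_right, Complex.conj_ofReal] at h
  have h' : ((l : ℂ) - m) * ⟪x, y⟫_ℂ = 0 := by rw [sub_mul, h, sub_self]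
  exact (mul_eq_zero.mp h').resolve_left (sub_ne_zero.mpr (by exact_mod_cast hlm))

/-- A positive semidefinite square root `B` of `A ∘ A` acts as `|l|` on the `l`-eigenvectors of `A`.
The vector `w = B e - |l| e` satisfies `B w = -|l| w`, which positivity of `B` only allows for
`w = 0` when `l ≠ 0`; when `l = 0`, the vector `e` lies in `ker B² = ker B`. -/
theorem sqrt_apply_eigenvector {A B : V →ₗ[ℂ] V} (hBsq : B ∘ₗ B = A ∘ₗ A)
    (hBsym : ∀ x y : V, ⟪B x, y⟫_ℂ = ⟪x, B y⟫_ℂ)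
    (hBpos : ∀ x : V, 0 ≤ (⟪B x, x⟫_ℂ).re) {l : ℝ} {e : V} (he : A e = (l : ℂ) • e) :
    B e = ((|l| : ℝ) : ℂ) • e := by
  have hBB : B (B e) = ((l : ℂ) * l) • e := by
    rw [← LinearMap.comp_apply, hBsq, LinearMap.comp_apply, he, map_smul, he, smul_smul]
  rcases eq_or_ne l 0 with rfl | hl
  · have h : ⟪B e, B e⟫_ℂ = 0 := by rw [hBsym, hBB]; simp
    simpa using h
  · have habs : ((|l| : ℝ) : ℂ) * ((|l| : ℝ) : ℂ) = (l : ℂ) * l := by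
      exact_mod_cast abs_mul_abs_self l
    set w := B e - ((|l| : ℝ) : ℂ) • e with hw
    have hBw : B w = ((-|l| : ℝ) : ℂ) • w := by
      rw [hw, map_sub, map_smul, hBB, ← habs]
      push_cast
      module
    have h := hBpos w
    rw [hBw, inner_smul_left, Complex.conj_ofReal, Complex.re_ofReal_mul] at h
    have hn : (⟪w, w⟫_ℂ).re = ‖w‖ ^ 2 := (norm_sq_eq_re_inner (𝕜 := ℂ) w).symm
    rw [hn] at h
    have hl' : 0 < |l| := abs_pos.mpr hl
    have hw0 : ‖w‖ ^ 2 = 0 := by nlinarith [sq_nonneg ‖w‖]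
    exact sub_eq_zero.mp (norm_eq_zero.mp (pow_eq_zero_iff two_ne_zero |>.mp hw0))

theorem inner_posEigenspaceEnd_eq_zero {A : V →ₗ[ℂ] V}
    (hA : ∀ x y : V, ⟪A x, y⟫_ℂ = ⟪x, A y⟫_ℂ) {l : ℝ} (hl : l ≤ 0) {e : V}
    (he : A e = (l : ℂ) • e) {y : V} (hy : y ∈ posEigenspaceEnd A) : ⟪e, y⟫_ℂ = 0 := by
  induction hy using Submodule.span_induction with
  | mem x hx =>
    obtain ⟨-, m, hm, hx⟩ := hx
    exact inner_eq_zero_of_eigenvalues_ne hA (hl.trans_lt hm).ne he hx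
  | zero => simp
  | add x y _ _ hx hy => simp [hx, hy]
  | smul c x _ hx => simp [hx]

end

/-- The functional-calculus identity (2.7): `|A| + Π₀` is invertible and
`Π_> = ½ (A + |A|)(|A| + Π₀)⁻¹`. -/
theorem positive_spectral_projection_formula
    (V : Type*) [NormedAddCommGroup V] [InnerProductSpace ℂ V] [FiniteDimensional ℂ V]
    (A : V →ₗ[ℂ] V) (hA : ∀ x y : V, ⟪A x, y⟫_ℂ = ⟪x, A y⟫_ℂ)
    -- `P0` is the orthogonal projection onto `ker A`:
    (P0 : V →ₗ[ℂ] V) (hP02 : P0 ∘ₗ P0 = P0)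
    (hP0sym : ∀ x y : V, ⟪P0 x, y⟫_ℂ = ⟪x, P0 y⟫_ℂ)
    (hP0range : LinearMap.range P0 = LinearMap.ker A)
    -- `B = |A|` is the positive-semidefinite square root of `A ∘ A`:
    (B : V →ₗ[ℂ] V) (hBsq : B ∘ₗ B = A ∘ₗ A)
    (hBsym : ∀ x y : V, ⟪B x, y⟫_ℂ = ⟪x, B y⟫_ℂ)
    (hBpos : ∀ x : V, 0 ≤ (⟪B x, x⟫_ℂ).re)
    -- `Pgt` is the orthogonal projection onto `V₊(A)`:
    (Pgt : V →ₗ[ℂ] V) (hPgt2 : Pgt ∘ₗ Pgt = Pgt)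
    (hPgtsym : ∀ x y : V, ⟪Pgt x, y⟫_ℂ = ⟪x, Pgt y⟫_ℂ)
    (hPgtrange : LinearMap.range Pgt = posEigenspaceEnd A) :
    IsUnit (B + P0) ∧
    Pgt = (1 / 2 : ℂ) • ((A + B) * Ring.inverse (B + P0)) := by
  have hAs : A.IsSymmetric := hA
  let b := hAs.eigenvectorBasis rfl
  let ev := hAs.eigenvalues rfl
  have hb : ∀ i, A (b i) = (ev i : ℂ) • b i := hAs.apply_eigenvectorBasis rfl
  have hBb : ∀ i, B (b i) = ((|ev i| : ℝ) : ℂ) • b i := fun i =>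
    sqrt_apply_eigenvector hBsq hBsym hBpos (hb i)
  have hP0b : ∀ i, P0 (b i) = if ev i = 0 then b i else 0 := by
    intro i
    split_ifs with h
    · refine apply_eq_self_of_mem_range hP02 ?_
      rw [hP0range, LinearMap.mem_ker, hb, h]
      simp
    · refine apply_eq_zero_of_orthogonal_range hP02 hP0sym fun y hy => ?_
      rw [hP0range, LinearMap.mem_ker] at hy
      exact inner_eq_zero_of_eigenvalues_ne hA h (hb i) (by simpa using hy)
  have hPgtb : ∀ i, Pgt (b i) = if 0 < ev i then b i else 0 := by
    intro i
    split_ifs with h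
    · refine apply_eq_self_of_mem_range hPgt2 ?_
      rw [hPgtrange]
      exact Submodule.subset_span ⟨b.orthonormal.ne_zero i, ev i, h, hb i⟩
    · refine apply_eq_zero_of_orthogonal_range hPgt2 hPgtsym fun y hy => ?_
      rw [hPgtrange] at hy
      exact inner_posEigenspaceEnd_eq_zero hA (not_lt.mp h) (hb i) hy
  have hSb : ∀ i, (B + P0) (b i) = (if ev i = 0 then (1 : ℂ) else ((|ev i| : ℝ) : ℂ)) • b i := by
    intro i
    rw [LinearMap.add_apply, hBb, hP0b]
    split_ifs with h <;> simp [h]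
  have hunit : IsUnit (B + P0) := by
    rw [LinearMap.isUnit_iff_range_eq_top, eq_top_iff, ← b.toBasis.span_eq, Submodule.span_le]
    rintro _ ⟨i, rfl⟩
    have hc : (if ev i = 0 then (1 : ℂ) else ((|ev i| : ℝ) : ℂ)) ≠ 0 := by
      split_ifs with h <;> simp [h]
    refine ⟨(if ev i = 0 then (1 : ℂ) else ((|ev i| : ℝ) : ℂ))⁻¹ • b i, ?_⟩
    rw [map_smul, hSb, inv_smul_smul₀ hc, OrthonormalBasis.coe_toBasis]
  have hmul : Pgt * (B + P0) = (1 / 2 : ℂ) • (A + B) := by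
    refine b.toBasis.ext fun i => ?_
    rw [OrthonormalBasis.coe_toBasis, Module.End.mul_apply, hSb, map_smul, hPgtb,
      LinearMap.smul_apply, LinearMap.add_apply, hb, hBb]
    rcases lt_trichotomy (ev i) 0 with h | h | h
    · simp [h.not_gt, abs_of_neg h]
    · simp [h]
    · rw [if_neg h.ne', if_pos h, abs_of_pos h]
      module
  refine ⟨hunit, ?_⟩
  rw [← smul_mul_assoc, ← hmul, Ring.mul_inverse_cancel_right _ _ hunit]
end

section
/- Let f : (0,∞) → ℂ be measurable and suppose there are constants C > 0 and c ∈ ℝ with |f(t)| ≤ C·e^{ct} for all t ≥ 1. Let k > −1 be real, ε > 0, and c′, c″ ∈ ℂ be such that |f(t) − (−c′·log t + c″)·t^k| ≤ C·t^{k+ε} for all 0 < t ≤ 1. Then, as x → +∞ through real values, ∫₀^∞ e^{−xt}·f(t)·dt = x^{−k−1}·( c′·Γ(k+1)·log x + c″·Γ(k+1) − c′·Γ′(k+1) ) + O(x^{−k−1−ε}), where Γ is the Gamma function and Γ′ its derivative. -/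
/-!
Write `g t = (-c' log t + c'') t ^ k`. The Laplace transform of `g` is computed exactly:
`∫ t ^ (s - 1) e ^ (-x t) dt = x ^ (-s) Γ(s)`, and differentiating this identity in `s` gives
`∫ t ^ (s - 1) log t e ^ (-x t) dt = x ^ (-s) (Γ'(s) - Γ(s) log x)`
(`integral_log_mul_rpow_mul_exp`); taking `s = k + 1` produces the main term.

For the remainder, the bound near `0` and the exponential bound away from `0` combine into a single
estimate `‖f t - g t‖ ≤ M t ^ (k + ε) e ^ (a t)` on all of `(0, ∞)` (`remainder_bound`). Its Laplace
transform is `M Γ(k + ε + 1) (x - a) ^ (-k - ε - 1)`, which is `O(x ^ (-k - 1 - ε))`.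
-/

open MeasureTheory Real Set Filter Asymptotics

/-- The Mellin transform of `t ↦ e ^ (-x t)` may be differentiated under the integral sign. -/
lemma mellin_exp_hasDerivAt {s x : ℝ} (hs : 0 < s) (hx : 0 < x) :
    MellinConvergent (fun t : ℝ => Real.log t • ((Real.exp (-(x * t)) : ℝ) : ℂ)) (s : ℂ) ∧
      HasDerivAt (mellin fun t : ℝ => ((Real.exp (-(x * t)) : ℝ) : ℂ))
        (mellin (fun t : ℝ => Real.log t • ((Real.exp (-(x * t)) : ℝ) : ℂ)) (s : ℂ)) (s : ℂ) := by
  have hcont : Continuous fun t : ℝ => ((Real.exp (-(x * t)) : ℝ) : ℂ) := by fun_prop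
  refine mellin_hasDerivAt_of_isBigO_rpow (a := s + 1) (b := 0)
    (hcont.continuousOn.locallyIntegrableOn measurableSet_Ioi) ?_ (by simp) ?_ (by simpa using hs)
  · rw [← isBigO_norm_left]
    simp_rw [Complex.norm_real, isBigO_norm_left]
    simpa only [neg_mul] using (isLittleO_exp_neg_mul_rpow_atTop hx (-(s + 1))).isBigO
  · simp_rw [neg_zero, rpow_zero]
    refine isBigO_const_of_tendsto (y := (1 : ℂ)) ?_ one_ne_zero
    have := hcont.tendsto 0
    simp only [mul_zero, neg_zero, Real.exp_zero, Complex.ofReal_one] at this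
    exact this.mono_left nhdsWithin_le_nhds

lemma mellin_exp_ofReal {s x : ℝ} (hs : 0 < s) (hx : 0 < x) :
    mellin (fun t : ℝ => ((Real.exp (-(x * t)) : ℝ) : ℂ)) (s : ℂ)
      = (((1 / x) ^ s * Real.Gamma s : ℝ) : ℂ) := by
  rw [← Real.integral_rpow_mul_exp_neg_mul_Ioi hs hx, ← integral_complex_ofReal, mellin]
  refine setIntegral_congr_fun measurableSet_Ioi fun t ht => ?_
  have ht' : (0 : ℝ) ≤ t := le_of_lt ht
  simp [Complex.ofReal_cpow ht']

lemma mellin_log_exp_integrand {s x t : ℝ} (ht : 0 < t) :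
    (t : ℂ) ^ ((s : ℂ) - 1) • (Real.log t • ((Real.exp (-(x * t)) : ℝ) : ℂ))
      = ((t ^ (s - 1) * (Real.log t * Real.exp (-(x * t))) : ℝ) : ℂ) := by
  simp [Complex.ofReal_cpow ht.le]

lemma integrableOn_log_mul_rpow_mul_exp {s x : ℝ} (hs : 0 < s) (hx : 0 < x) :
    IntegrableOn (fun t : ℝ => ((t ^ (s - 1) * (Real.log t * Real.exp (-(x * t))) : ℝ) : ℂ))
      (Ioi 0) :=
  (mellin_exp_hasDerivAt hs hx).1.congr_fun (fun _ ht => mellin_log_exp_integrand ht)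
    measurableSet_Ioi

/-- The Laplace transform of `t ^ (s - 1) log t`: both sides are the derivative in `s` of
`∫ t ^ (s - 1) e ^ (-x t) dt = x ^ (-s) Γ(s)`. -/
lemma integral_log_mul_rpow_mul_exp {s x : ℝ} (hs : 0 < s) (hx : 0 < x) :
    ∫ t in Ioi (0 : ℝ), ((t ^ (s - 1) * (Real.log t * Real.exp (-(x * t))) : ℝ) : ℂ)
      = ((x ^ (-s) * (deriv Real.Gamma s - Real.Gamma s * Real.log x) : ℝ) : ℂ) := by
  have h1 := (mellin_exp_hasDerivAt hs hx).2.comp_ofReal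
  have hG : HasDerivAt Real.Gamma (deriv Real.Gamma s) s :=
    (Real.differentiableOn_Gamma_Ioi.differentiableAt (Ioi_mem_nhds hs)).hasDerivAt
  have hx' : 0 < 1 / x := by positivity
  have hP : HasDerivAt (fun r : ℝ => (1 / x) ^ r) ((1 / x) ^ s * Real.log (1 / x)) s :=
    (Real.hasStrictDerivAt_const_rpow hx' s).hasDerivAt
  have h2 := (hP.mul hG).ofReal_comp
  have h3 : (fun r : ℝ => mellin (fun t : ℝ => ((Real.exp (-(x * t)) : ℝ) : ℂ)) (r : ℂ))
      =ᶠ[nhds s] fun r : ℝ => (((1 / x) ^ r * Real.Gamma r : ℝ) : ℂ) := by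
    filter_upwards [Ioi_mem_nhds hs] with r hr using mellin_exp_ofReal hr hx
  have h4 := h1.unique (h2.congr_of_eventuallyEq h3)
  have h5 : ∫ t in Ioi (0 : ℝ), ((t ^ (s - 1) * (Real.log t * Real.exp (-(x * t))) : ℝ) : ℂ)
      = mellin (fun t : ℝ => Real.log t • ((Real.exp (-(x * t)) : ℝ) : ℂ)) (s : ℂ) :=
    setIntegral_congr_fun measurableSet_Ioi fun t ht => (mellin_log_exp_integrand ht).symm
  rw [h5, h4]
  congr 1
  rw [one_div, Real.log_inv, Real.inv_rpow hx.le, Real.rpow_neg hx.le]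
  ring

lemma integrableOn_rpow_mul_exp {p x : ℝ} (hp : -1 < p) (hx : 0 < x) :
    IntegrableOn (fun t : ℝ => t ^ p * Real.exp (-(x * t))) (Ioi 0) := by
  simpa using integrableOn_rpow_mul_exp_neg_mul_rpow hp one_pos hx

lemma laplace_model_integrand (k x t : ℝ) (c' c'' : ℂ) :
    (Real.exp (-(x * t)) : ℂ) * ((-c' * (Real.log t : ℂ) + c'') * ((t ^ k : ℝ) : ℂ))
      = -c' * ((t ^ (k + 1 - 1) * (Real.log t * Real.exp (-(x * t))) : ℝ) : ℂ)
        + c'' * ((t ^ (k + 1 - 1) * Real.exp (-(x * t)) : ℝ) : ℂ) := by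
  rw [add_sub_cancel_right]
  push_cast
  ring

lemma integrableOn_laplace_model {k x : ℝ} (hk : -1 < k) (hx : 0 < x) (c' c'' : ℂ) :
    IntegrableOn (fun t : ℝ => (Real.exp (-(x * t)) : ℂ)
      * ((-c' * (Real.log t : ℂ) + c'') * ((t ^ k : ℝ) : ℂ))) (Ioi 0) := by
  simp_rw [laplace_model_integrand]
  have h := (integrableOn_rpow_mul_exp (p := k + 1 - 1) (by linarith) hx).ofReal (𝕜 := ℂ)
  exact ((integrableOn_log_mul_rpow_mul_exp (s := k + 1) (by linarith) hx).const_mul _).add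
    (h.const_mul _)

/-- The exact Laplace transform of the model function `(-c' log t + c'') t ^ k`. -/
lemma integral_laplace_model {k x : ℝ} (hk : -1 < k) (hx : 0 < x) (c' c'' : ℂ) :
    ∫ t in Ioi (0 : ℝ), (Real.exp (-(x * t)) : ℂ)
        * ((-c' * (Real.log t : ℂ) + c'') * ((t ^ k : ℝ) : ℂ))
      = ((x ^ (-k - 1) : ℝ) : ℂ)
            * (c' * (Real.Gamma (k + 1) : ℂ) * (Real.log x : ℂ)
              + c'' * (Real.Gamma (k + 1) : ℂ)
              - c' * ((deriv Real.Gamma (k + 1) : ℝ) : ℂ)) := by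
  simp_rw [laplace_model_integrand]
  have hs : 0 < k + 1 := by linarith
  have h : IntegrableOn
      (fun t : ℝ => ((t ^ (k + 1 - 1) * Real.exp (-(x * t)) : ℝ) : ℂ)) (Ioi 0) :=
    (integrableOn_rpow_mul_exp (by linarith) hx).ofReal (𝕜 := ℂ)
  rw [integral_add ((integrableOn_log_mul_rpow_mul_exp hs hx).const_mul _) (h.const_mul _),
    integral_const_mul, integral_const_mul, integral_log_mul_rpow_mul_exp hs hx,
    integral_complex_ofReal, Real.integral_rpow_mul_exp_neg_mul_Ioi hs hx, one_div,
    Real.inv_rpow hx.le, ← Real.rpow_neg hx.le, show -(k + 1) = -k - 1 by ring]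
  push_cast
  ring

/-- For `t ≥ 1`, powers of `t` are dominated by exponentials, since `t ≤ e ^ t`. -/
lemma one_le_rpow_mul_exp {p t : ℝ} (ht : 1 ≤ t) : 1 ≤ t ^ p * Real.exp (|p| * t) := by
  have ht0 : 0 < t := by linarith
  have h1 : t ^ (-p) ≤ Real.exp (|p| * t) := by
    rw [Real.rpow_def_of_pos ht0, Real.exp_le_exp]
    have := Real.log_nonneg ht
    have := Real.log_le_self ht0.le
    nlinarith [neg_le_abs p, abs_nonneg p]
  calc (1 : ℝ) = t ^ p * t ^ (-p) := by rw [← Real.rpow_add ht0]; simp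
    _ ≤ _ := by gcongr

/-- A single bound for the remainder, valid on the whole half-line. -/
lemma remainder_bound
    (f : ℝ → ℂ) (C : ℝ) (c : ℝ) (hC : 0 < C)
    (hgrowth : ∀ t : ℝ, 1 ≤ t → ‖f t‖ ≤ C * Real.exp (c * t))
    (k ε : ℝ) (c' c'' : ℂ)
    (hsmall : ∀ t : ℝ, 0 < t → t ≤ 1 →
      ‖f t - (-c' * (Real.log t : ℂ) + c'') * ((t ^ k : ℝ) : ℂ)‖ ≤ C * t ^ (k + ε)) :
    ∃ M a : ℝ, 0 ≤ M ∧ 0 ≤ a ∧ ∀ t : ℝ, 0 < t →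
      ‖f t - (-c' * (Real.log t : ℂ) + c'') * ((t ^ k : ℝ) : ℂ)‖
        ≤ M * (t ^ (k + ε) * Real.exp (a * t)) := by
  refine ⟨C + ‖c'‖ + ‖c''‖, |c| + |k + ε| + |ε| + 1, by positivity, by positivity,
    fun t ht => ?_⟩
  set a : ℝ := |c| + |k + ε| + |ε| + 1
  have hp : 0 < t ^ (k + ε) := Real.rpow_pos_of_pos ht _
  rcases le_total t 1 with h | h
  · have he : 1 ≤ Real.exp (a * t) := Real.one_le_exp (by positivity)
    calc _ ≤ C * t ^ (k + ε) := hsmall t ht h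
      _ = C * (t ^ (k + ε) * 1) := by ring
      _ ≤ (C + ‖c'‖ + ‖c''‖) * (t ^ (k + ε) * Real.exp (a * t)) := by
        gcongr
        linarith [norm_nonneg c', norm_nonneg c'']
  · have hf1 : ‖f t‖ ≤ C * (t ^ (k + ε) * Real.exp (a * t)) := by
      calc ‖f t‖ ≤ C * Real.exp (c * t) := hgrowth t h
        _ = C * (Real.exp (c * t) * 1) := by ring
        _ ≤ C * (Real.exp (c * t) * (t ^ (k + ε) * Real.exp (|k + ε| * t))) := by
          gcongr
          exact one_le_rpow_mul_exp h
        _ = C * (t ^ (k + ε) * Real.exp (c * t + |k + ε| * t)) := by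
          rw [Real.exp_add]; ring
        _ ≤ _ := by
          gcongr
          simp only [a]
          nlinarith [le_abs_self c, abs_nonneg ε]
    have hl : ‖-c' * (Real.log t : ℂ) + c''‖ ≤ (‖c'‖ + ‖c''‖) * Real.exp t := by
      have hlog : |Real.log t| ≤ Real.exp t := by
        rw [abs_of_nonneg (Real.log_nonneg h)]
        linarith [Real.log_le_self ht.le, Real.add_one_le_exp t]
      have h1 : 1 ≤ Real.exp t := Real.one_le_exp ht.le
      calc _ ≤ ‖c'‖ * |Real.log t| + ‖c''‖ * 1 := by
            refine (norm_add_le _ _).trans ?_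
            simp
        _ ≤ ‖c'‖ * Real.exp t + ‖c''‖ * Real.exp t := by gcongr
        _ = _ := by ring
    have hk1 : t ^ k ≤ t ^ (k + ε) * Real.exp (|ε| * t) := by
      calc t ^ k = t ^ k * 1 := by ring
        _ ≤ t ^ k * (t ^ ε * Real.exp (|ε| * t)) := by
          gcongr
          exact one_le_rpow_mul_exp h
        _ = _ := by rw [Real.rpow_add ht]; ring
    have hg1 : ‖(-c' * (Real.log t : ℂ) + c'') * ((t ^ k : ℝ) : ℂ)‖
        ≤ (‖c'‖ + ‖c''‖) * (t ^ (k + ε) * Real.exp (a * t)) := by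
      rw [norm_mul, Complex.norm_real, Real.norm_of_nonneg (Real.rpow_nonneg ht.le _)]
      calc _ ≤ ((‖c'‖ + ‖c''‖) * Real.exp t) * (t ^ (k + ε) * Real.exp (|ε| * t)) := by gcongr
        _ = (‖c'‖ + ‖c''‖) * (t ^ (k + ε) * Real.exp (t + |ε| * t)) := by
          rw [Real.exp_add]; ring
        _ ≤ _ := by
          gcongr
          simp only [a]
          nlinarith [abs_nonneg c, abs_nonneg (k + ε)]
    refine (norm_sub_le _ _).trans ?_
    linarith

/-- Watson-type lemma with logarithmic terms: a term `(−c′ log t + c″) t^k` at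
`t → 0+` corresponds to the term
`x^{−k−1}(c′ Γ(k+1) log x + c″ Γ(k+1) − c′ Γ′(k+1))` of the Laplace transform
as `x → +∞`. -/
theorem watson_lemma_log_term
    (f : ℝ → ℂ) (hf : Measurable f)
    (C : ℝ) (c : ℝ) (hC : 0 < C)
    (hgrowth : ∀ t : ℝ, 1 ≤ t → ‖f t‖ ≤ C * Real.exp (c * t))
    (k ε : ℝ) (hk : -1 < k) (hε : 0 < ε) (c' c'' : ℂ)
    (hsmall : ∀ t : ℝ, 0 < t → t ≤ 1 →
      ‖f t - (-c' * (Real.log t : ℂ) + c'') * ((t ^ k : ℝ) : ℂ)‖ ≤ C * t ^ (k + ε)) :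
    (fun x : ℝ =>
        (∫ t in Ioi (0 : ℝ), (Real.exp (-(x * t)) : ℂ) * f t)
          - ((x ^ (-k - 1) : ℝ) : ℂ)
            * (c' * (Real.Gamma (k + 1) : ℂ) * (Real.log x : ℂ)
              + c'' * (Real.Gamma (k + 1) : ℂ)
              - c' * ((deriv Real.Gamma (k + 1) : ℝ) : ℂ)))
      =O[atTop] fun x : ℝ => x ^ (-k - 1 - ε) := by
  obtain ⟨M, a, hM, ha, hb⟩ := remainder_bound f C c hC hgrowth k ε c' c'' hsmall
  set g : ℝ → ℂ := fun t => (-c' * (Real.log t : ℂ) + c'') * ((t ^ k : ℝ) : ℂ) with hg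
  have hs : 0 < k + ε + 1 := by linarith
  refine IsBigO.of_bound (M * Real.Gamma (k + ε + 1) * 2 ^ (k + ε + 1)) ?_
  filter_upwards [eventually_ge_atTop (2 * a + 1)] with x hx
  have hx0 : 0 < x := by linarith
  have hxa : 0 < x - a := by linarith
  have hbound : ∀ t ∈ Ioi (0 : ℝ), ‖(Real.exp (-(x * t)) : ℂ) * (f t - g t)‖
      ≤ M * (t ^ (k + ε + 1 - 1) * Real.exp (-((x - a) * t))) := by
    intro t ht
    rw [norm_mul, Complex.norm_real, Real.norm_of_nonneg (Real.exp_nonneg _)]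
    calc _ ≤ Real.exp (-(x * t)) * (M * (t ^ (k + ε) * Real.exp (a * t))) := by
          gcongr
          exact hb t ht
      _ = _ := by
        rw [show -((x - a) * t) = -(x * t) + a * t by ring, Real.exp_add, add_sub_cancel_right]
        ring
  have hmajor : IntegrableOn
      (fun t : ℝ => M * (t ^ (k + ε + 1 - 1) * Real.exp (-((x - a) * t)))) (Ioi 0) :=
    (integrableOn_rpow_mul_exp (by linarith) hxa).const_mul M
  have hmeas : Measurable fun t : ℝ => (Real.exp (-(x * t)) : ℂ) * (f t - g t) := by
    have : Measurable g := by
      simp only [hg]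
      fun_prop
    fun_prop
  have hbound' : ∀ᵐ t ∂(volume.restrict (Ioi (0 : ℝ))),
      ‖(Real.exp (-(x * t)) : ℂ) * (f t - g t)‖
        ≤ M * (t ^ (k + ε + 1 - 1) * Real.exp (-((x - a) * t))) :=
    (ae_restrict_mem measurableSet_Ioi).mono hbound
  have hdint : IntegrableOn (fun t : ℝ => (Real.exp (-(x * t)) : ℂ) * (f t - g t)) (Ioi 0) :=
    Integrable.mono' hmajor hmeas.aestronglyMeasurable hbound'
  have hgint := integrableOn_laplace_model hk hx0 c' c''
  have hsplit : ∫ t in Ioi (0 : ℝ), (Real.exp (-(x * t)) : ℂ) * f t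
      = (∫ t in Ioi (0 : ℝ), (Real.exp (-(x * t)) : ℂ) * (f t - g t))
        + ∫ t in Ioi (0 : ℝ), (Real.exp (-(x * t)) : ℂ) * g t := by
    rw [← integral_add hdint hgint]
    congr 1
    ext t
    ring
  rw [hsplit, integral_laplace_model hk hx0 c' c'', add_sub_cancel_right]
  refine (norm_integral_le_of_norm_le hmajor hbound').trans ?_
  rw [integral_const_mul, Real.integral_rpow_mul_exp_neg_mul_Ioi hs hxa,
    Real.norm_of_nonneg (Real.rpow_nonneg hx0.le _)]
  -- `x ≥ 2 a` gives `x - a ≥ x / 2`, which costs the factor `2 ^ (k + ε + 1)`.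
  have h2 : 1 / (x - a) ≤ 2 * x⁻¹ := by
    rw [← div_eq_mul_inv, div_le_div_iff₀ hxa hx0]
    linarith
  have h3 : (1 / (x - a)) ^ (k + ε + 1) ≤ 2 ^ (k + ε + 1) * x ^ (-k - 1 - ε) := by
    calc _ ≤ (2 * x⁻¹) ^ (k + ε + 1) := by gcongr
      _ = _ := by
        rw [Real.mul_rpow (by norm_num) (by positivity), Real.inv_rpow hx0.le,
          ← Real.rpow_neg hx0.le]
        ring_nf
  have hGam : 0 < Real.Gamma (k + ε + 1) := Real.Gamma_pos_of_pos hs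
  calc _ ≤ M * (2 ^ (k + ε + 1) * x ^ (-k - 1 - ε) * Real.Gamma (k + ε + 1)) := by gcongr
    _ = _ := by ring
end
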